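/- Let C be a category with binary coproducts, F : C ⥤ C an endofunctor, and K an object of C. Define X : ℕ → C by X 0 = K and X (n+1) = K ⨿ F.obj (X n), and morphisms i n : X n ⟶ X (n+1) by i 0 = coprod.inl and i (n+1) = coprod.map (𝟙 K) (F.map (i n)); let D : ℕ ⥤ C be the resulting chain. Suppose D admits a colimit cocone with point K* and coprojections ι n : X n ⟶ K*, and let u : K* ⟶ K ⨿ F.obj K* be the unique morphism satisfying ι 0 ≫ u = coprod.inl and ι (n+1) ≫ u = coprod.map (𝟙 K) (F.map (ι n)) for all n. If u is an isomorphism, then setting a := coprod.inr ≫ inv u : F.obj K* ⟶ K*, the F-algebra (K*, a) together with j := ι 0 : K ⟶ K* is a free F-algebra on K: for every F-algebra (A, α) and every morphism g : K ⟶ A in C there exists a unique F-algebra homomorphism h : (K*, a) ⟶ (A, α) such that j ≫ h.f = g. -/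

import Mathlib

/-!
When `u : K* ⟶ K ⨿ F K*` is invertible, the homomorphisms `h : K* ⟶ A` extending `g : K ⟶ A` are
exactly the solutions of the recursive equation `h = u ≫ [g, F h ≫ α]`. Precomposing this equation
with the coprojections `ι n` determines `ι n ≫ h` by recursion on `n`, and the morphisms so
determined form a cocone on the free chain. Hence the equation has exactly one solution, namely the
morphism induced by this cocone.
-/

open CategoryTheory CategoryTheory.Limits

universe v u

namespace Adamek2

variable {C : Type u} [Category.{v} C] [HasBinaryCoproducts C] (F : C ⥤ C) (K : C)

/-- The objects of the free chain: `X 0 = K`, `X (n+1) = K ⨿ F (X n)`. -/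
noncomputable def X : ℕ → C
  | 0 => K
  | n + 1 => K ⨿ F.obj (X n)

/-- The connecting morphisms of the free chain. -/
noncomputable def i : ∀ n : ℕ, X F K n ⟶ X F K (n + 1)
  | 0 => coprod.inl
  | n + 1 => coprod.map (𝟙 K) (F.map (i n))

/-- The free chain `K ⟶ K ⨿ F K ⟶ K ⨿ F (K ⨿ F K) ⟶ ⋯` as a functor `ℕ ⥤ C`. -/
noncomputable def D : ℕ ⥤ C := Functor.ofSequence (i F K)

end Adamek2

namespace Adamek2

section CoalgebraToAlgebra

variable {C : Type u} [Category.{v} C] [HasBinaryCoproducts C] {F : C ⥤ C} {K P : C}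

theorem map_id_map_comp_desc {Q : C} (A : Endofunctor.Algebra F) (g : K ⟶ A.a) (q : Q ⟶ P)
    (f : P ⟶ A.a) :
    coprod.map (𝟙 K) (F.map q) ≫ coprod.desc g (F.map f ≫ A.str) =
      coprod.desc g (F.map (q ≫ f) ≫ A.str) := by
  rw [coprod.map_desc, Category.id_comp, F.map_comp, Category.assoc]

/-- `f` is a coalgebra-to-algebra morphism, for the functor `K ⨿ F (-)`, from the coalgebra `(P, u)`
to the algebra on `A.a` with structure map `coprod.desc g A.str`. The structure map is already
composed with `coprod.map (𝟙 K) (F.map f)` in the encoding. -/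
def IsCoalgebraToAlgebra (u : P ⟶ K ⨿ F.obj P) (A : Endofunctor.Algebra F) (g : K ⟶ A.a)
    (f : P ⟶ A.a) : Prop :=
  f = u ≫ coprod.desc g (F.map f ≫ A.str)

theorem isCoalgebraToAlgebra_iff_of_isIso {u : P ⟶ K ⨿ F.obj P} [IsIso u] {j : K ⟶ P}
    (hj : j ≫ u = coprod.inl) {A : Endofunctor.Algebra F} {g : K ⟶ A.a} {f : P ⟶ A.a} :
    IsCoalgebraToAlgebra u A g f ↔
      j ≫ f = g ∧ F.map f ≫ A.str = (coprod.inr ≫ inv u) ≫ f := by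
  obtain rfl : j = coprod.inl ≫ inv u := (IsIso.eq_comp_inv u).2 hj
  rw [IsCoalgebraToAlgebra, ← IsIso.inv_comp_eq]
  constructor
  · intro hf
    simp only [Category.assoc, hf, coprod.inl_desc, coprod.inr_desc, and_self]
  · rintro ⟨hinl, hinr⟩
    ext
    · rw [coprod.inl_desc, ← Category.assoc, hinl]
    · rw [coprod.inr_desc, ← Category.assoc, hinr]

theorem existsUnique_algebraHom_of_existsUnique_isCoalgebraToAlgebra
    {u : P ⟶ K ⨿ F.obj P} [IsIso u] {j : K ⟶ P} (hj : j ≫ u = coprod.inl)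
    {A : Endofunctor.Algebra F} {g : K ⟶ A.a} (hu : ∃! f, IsCoalgebraToAlgebra u A g f) :
    ∃! h : (⟨P, coprod.inr ≫ inv u⟩ : Endofunctor.Algebra F) ⟶ A, j ≫ h.f = g := by
  obtain ⟨f, hf, hf_unique⟩ := hu
  obtain ⟨hjf, hstr⟩ := (isCoalgebraToAlgebra_iff_of_isIso hj).1 hf
  refine ⟨⟨f, hstr⟩, hjf, fun h hjh ↦ Endofunctor.Algebra.ext ?_⟩
  exact hf_unique h.f ((isCoalgebraToAlgebra_iff_of_isIso hj).2 ⟨hjh, h.h⟩)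

end CoalgebraToAlgebra

section Chain

variable {C : Type u} [Category.{v} C] [HasBinaryCoproducts C] {F : C ⥤ C} {K : C}
  (A : Endofunctor.Algebra F) (g : K ⟶ A.a)

/-- The morphisms from the stages of the free chain to an algebra `A` induced by `g : K ⟶ A.a`:
the `n`-th one evaluates in `A` the formal `F`-terms over `K` of depth at most `n`. -/
noncomputable def chainMap : ∀ n : ℕ, X F K n ⟶ A.a
  | 0 => g
  | n + 1 => coprod.desc g (F.map (chainMap n) ≫ A.str)

theorem i_comp_chainMap_succ (n : ℕ) : i F K n ≫ chainMap A g (n + 1) = chainMap A g n := by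
  induction n with
  | zero => exact coprod.inl_desc _ _
  | succ n ih =>
    calc
      coprod.map (𝟙 K) (F.map (i F K n)) ≫
          coprod.desc g (F.map (chainMap A g (n + 1)) ≫ A.str)
        = coprod.desc g (F.map (i F K n ≫ chainMap A g (n + 1)) ≫ A.str) :=
          map_id_map_comp_desc A g _ _
      _ = coprod.desc g (F.map (chainMap A g n) ≫ A.str) := by rw [ih]

variable (F K) in
theorem D_map_homOfLE_succ (n : ℕ) :
    (D F K).map (homOfLE (Nat.le_add_right n 1)) = i F K n :=
  Functor.ofSequence_map_homOfLE_succ (i F K) n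

/-- The morphisms `chainMap A g n` as a cocone on the free chain. -/
noncomputable def chainCocone : Cocone (D F K) where
  pt := A.a
  ι := NatTrans.ofSequence (F := D F K) (G := (Functor.const ℕ).obj A.a) (chainMap A g) fun n ↦ by
    rw [D_map_homOfLE_succ]
    exact (i_comp_chainMap_succ A g n).trans (Category.comp_id _).symm

variable {A g} {P : C} {u : P ⟶ K ⨿ F.obj P} {ι : ∀ n, X F K n ⟶ P} {f : P ⟶ A.a}

theorem comp_desc_eq_chainMap_zero (hu0 : ι 0 ≫ u = coprod.inl) :
    ι 0 ≫ u ≫ coprod.desc g (F.map f ≫ A.str) = chainMap A g 0 := by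
  rw [← Category.assoc, hu0]
  exact coprod.inl_desc _ _

theorem comp_desc_eq_chainMap_succ {n : ℕ}
    (hus : ι (n + 1) ≫ u = coprod.map (𝟙 K) (F.map (ι n)))
    (hf : ι n ≫ f = chainMap A g n) :
    ι (n + 1) ≫ u ≫ coprod.desc g (F.map f ≫ A.str) = chainMap A g (n + 1) := by
  rw [← Category.assoc, hus]
  calc
    coprod.map (𝟙 K) (F.map (ι n)) ≫ coprod.desc g (F.map f ≫ A.str)
      = coprod.desc g (F.map (ι n ≫ f) ≫ A.str) := map_id_map_comp_desc A g _ _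
    _ = coprod.desc g (F.map (chainMap A g n) ≫ A.str) := by rw [hf]

theorem IsCoalgebraToAlgebra.comp_eq_chainMap (hf : IsCoalgebraToAlgebra u A g f)
    (hu0 : ι 0 ≫ u = coprod.inl)
    (hus : ∀ n, ι (n + 1) ≫ u = coprod.map (𝟙 K) (F.map (ι n))) (n : ℕ) :
    ι n ≫ f = chainMap A g n := by
  induction n with
  | zero => rw [hf, comp_desc_eq_chainMap_zero hu0]
  | succ n ih => rw [hf, comp_desc_eq_chainMap_succ (hus n) ih]

end Chain

section Colimit

variable {C : Type u} [Category.{v} C] [HasBinaryCoproducts C] {F : C ⥤ C} {K : C}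
  {c : Cocone (D F K)} {u : c.pt ⟶ K ⨿ F.obj c.pt}

theorem isCoalgebraToAlgebra_iff_forall_comp_eq_chainMap (hc : IsColimit c)
    (hu0 : c.ι.app 0 ≫ u = coprod.inl)
    (hus : ∀ n : ℕ, c.ι.app (n + 1) ≫ u = coprod.map (𝟙 K) (F.map (c.ι.app n)))
    {A : Endofunctor.Algebra F} {g : K ⟶ A.a} {f : c.pt ⟶ A.a} :
    IsCoalgebraToAlgebra u A g f ↔ ∀ n : ℕ, c.ι.app n ≫ f = chainMap A g n := by
  refine ⟨fun hf ↦ hf.comp_eq_chainMap (ι := c.ι.app) hu0 hus, fun hf ↦ hc.hom_ext fun n ↦ ?_⟩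
  refine (hf n).trans (Eq.symm ?_)
  cases n with
  | zero => exact comp_desc_eq_chainMap_zero (ι := c.ι.app) hu0
  | succ n => exact comp_desc_eq_chainMap_succ (ι := c.ι.app) (hus n) (hf n)

theorem existsUnique_isCoalgebraToAlgebra (hc : IsColimit c)
    (hu0 : c.ι.app 0 ≫ u = coprod.inl)
    (hus : ∀ n : ℕ, c.ι.app (n + 1) ≫ u = coprod.map (𝟙 K) (F.map (c.ι.app n)))
    (A : Endofunctor.Algebra F) (g : K ⟶ A.a) :
    ∃! f, IsCoalgebraToAlgebra u A g f := by
  simp only [isCoalgebraToAlgebra_iff_forall_comp_eq_chainMap hc hu0 hus]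
  exact hc.existsUnique (chainCocone A g)

end Colimit

end Adamek2

/-- Ad\'amek's free algebra construction: if the free chain on `K` has a colimit `K*`
and the canonically induced morphism `u : K* ⟶ K ⨿ F K*` is an isomorphism, then
`(K*, coprod.inr ≫ inv u)` together with `ι 0 : K ⟶ K*` is a free `F`-algebra on `K`. -/
theorem adamek_free_algebra {C : Type u} [Category.{v} C] [HasBinaryCoproducts C]
    (F : C ⥤ C) (K : C)
    (c : Cocone (Adamek2.D F K)) (hc : IsColimit c)
    (u : c.pt ⟶ K ⨿ F.obj c.pt)
    (hu0 : c.ι.app 0 ≫ u = coprod.inl)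
    (hus : ∀ n : ℕ, c.ι.app (n + 1) ≫ u = coprod.map (𝟙 K) (F.map (c.ι.app n)))
    (hiso : IsIso u) :
    ∀ (A : Endofunctor.Algebra F) (g : K ⟶ A.a),
      ∃! h : (⟨c.pt, coprod.inr ≫ inv u⟩ : Endofunctor.Algebra F) ⟶ A,
        c.ι.app 0 ≫ h.f = g := by
  intro A g
  have hsol : ∃! f, Adamek2.IsCoalgebraToAlgebra u A g f :=
    Adamek2.existsUnique_isCoalgebraToAlgebra hc hu0 hus A g
  exact Adamek2.existsUnique_algebraHom_of_existsUnique_isCoalgebraToAlgebra (u := u) hu0 hsol
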